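/- arXiv:1907.11476 — 2 statements merged into one kernel-verified Lean document; each statement's English description precedes it below -/
import Mathlib

section
/- Let N ≥ 1, let 2 ≤ q₁,…,q_N < ∞, let X = T_{q₁} × ⋯ × T_{q_N}, and let μ be a positive finite Borel measure on [-1,1]^N. Then the kernel ψ on X defined by ψ(x,y) = ∫_{[-1,1]^N} P_{d₁(x₁,y₁)}^{(q₁)}(t₁) ⋯ P_{d_N(x_N,y_N)}^{(q_N)}(t_N) dμ(t₁,…,t_N), where x = (x₁,…,x_N) and y = (y₁,…,y_N) and d_i is the edge-path distance on T_{q_i}, is positive definite on X. -/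
open MeasureTheory Filter Finset
open scoped ComplexOrder

/-- The polynomials `P_n^{(q)}`. -/
noncomputable def treeP (q : ℕ) : ℕ → ℝ → ℝ
  | 0, _ => 1
  | 1, x => x
  | (n+2), x => (1 + 1/(q:ℝ)) * x * treeP q (n+1) x - (1/(q:ℝ)) * treeP q n x

/-- The polynomials `Q_n^{(q)}`. -/
noncomputable def treeQ (q : ℕ) : ℕ → ℝ → ℝ
  | 0, _ => 1
  | 1, x => (1 + 1/(q:ℝ)) * x
  | (n+2), x => (1 + 1/(q:ℝ)) * x * treeQ q (n+1) x - (1/(q:ℝ)) * treeQ q n x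

/-- A kernel `ψ` on a set `X` is positive definite. -/
def IsPDKernel {X : Type*} (ψ : X → X → ℂ) : Prop :=
  ∀ (n : ℕ) (x : Fin n → X) (z : Fin n → ℂ),
    0 ≤ ∑ i, ∑ j, ψ (x i) (x j) * (starRingEnd ℂ) (z i) * z j

/-- `G` is a `(q+1)`-homogeneous tree: connected, acyclic, every vertex has exactly
`q+1` neighbours. -/
def IsHomTree {V : Type} (G : SimpleGraph V) (q : ℕ) : Prop :=
  G.Connected ∧ G.IsAcyclic ∧ ∀ v : V, (G.neighborSet v).ncard = q + 1

/-- `G` is a homogeneous tree of countably infinite degree. -/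
def IsInfTree {V : Type} (G : SimpleGraph V) : Prop :=
  G.Connected ∧ G.IsAcyclic ∧ ∀ v : V, (G.neighborSet v).Countable ∧ (G.neighborSet v).Infinite

/-!
By the Schur product theorem and integration over `μ`, it suffices that `P_{d(x, y)}^{(q)}(t)` is
positive semidefinite on the vertices of one tree, for fixed `t ∈ [-1, 1]`. Root the tree at `o`
and replace the basis vector `δ_x` by its residual
`δ_x - (1 + 1/q) t δ_p + (1/q) δ_g`, where `p` and `g` are the parent and grandparent of `x`
(`δ_x - t δ_p` if `x` is a child of `o`). This change of basis is unitriangular with respect to the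
distance from `o`. If `y` is no farther from `o` than `x`, then outside the case that `x` and `y`
are equal or siblings the recurrence for `P_n^{(q)}` makes the residual of `x` orthogonal to `δ_y`.
The Gram matrix of the residuals is therefore block diagonal, with one block `α I - β J` for each
set of siblings (`J` the all-ones matrix). By Cauchy–Schwarz such a block is positive semidefinite
as soon as `β` times its size is at most `α`. At the children of `o` one has
`α = (1 + 1/q)(1 - t²)`, `β = (1 - t²)/q`, and elsewhere `α = (1 + 1/q)(1 - t²)`, `β = α/q`: this
allows exactly `q + 1` children of the root and `q` children of every other vertex.
-/

/-! ### Positive semidefinite matrices -/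

section PosSemidef

variable {X Y : Type*}

/-- The bilinear form on finitely supported functions whose matrix in the standard basis is `K`. -/
noncomputable def kernelForm {R : Type*} [CommSemiring R] (K : Matrix X X R) :
    (X →₀ R) →ₗ[R] (X →₀ R) →ₗ[R] R :=
  Finsupp.linearCombination R fun x => Finsupp.linearCombination R (K x)

theorem kernelForm_single_single {R : Type*} [CommSemiring R] (K : Matrix X X R) (x y : X) :
    kernelForm K (.single x 1) (.single y 1) = K x y := by
  simp [kernelForm]

theorem kernelForm_comm {R : Type*} [CommSemiring R] {K : Matrix X X R}
    (hK : ∀ x y, K x y = K y x) (f g : X →₀ R) : kernelForm K f g = kernelForm K g f := by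
  suffices kernelForm K = (kernelForm K).flip from congr($this f g)
  ext x y
  simpa [kernelForm] using hK x y

theorem kernelForm_linearCombination {R ι : Type*} [CommSemiring R] (K : Matrix X X R)
    (e : ι → X →₀ R) (c d : ι →₀ R) :
    kernelForm K (Finsupp.linearCombination R e c) (Finsupp.linearCombination R e d) =
      c.sum fun i a => d.sum fun j b => a * kernelForm K (e i) (e j) * b := by
  simp only [Finsupp.linearCombination_apply, Finsupp.sum, map_sum, map_smul,
    LinearMap.sum_apply, LinearMap.smul_apply, smul_eq_mul, Finset.mul_sum]
  rw [Finset.sum_comm]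
  exact Finset.sum_congr rfl fun i _ => Finset.sum_congr rfl fun j _ => by ring

theorem posSemidef_of_span_eq_top {ι : Type*} {K : Matrix X X ℝ} (hK : ∀ x y, K x y = K y x)
    {e : ι → X →₀ ℝ} (he : Submodule.span ℝ (Set.range e) = ⊤)
    (h : (Matrix.of fun i j => kernelForm K (e i) (e j)).PosSemidef) : K.PosSemidef := by
  refine ⟨Matrix.IsHermitian.ext fun x y => hK y x, fun f => ?_⟩
  obtain ⟨c, hc⟩ : ∃ c, Finsupp.linearCombination ℝ e c = f := by
    rw [← LinearMap.mem_range, Finsupp.range_linearCombination, he]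
    exact Submodule.mem_top
  have hf : kernelForm K f f = f.sum fun x a => f.sum fun y b => star a * K x y * b := by
    have hf_lin : Finsupp.linearCombination ℝ (fun x => Finsupp.single x 1) f = f := by
      simp [Finsupp.linearCombination_apply]
    conv_lhs => rw [← hf_lin, kernelForm_linearCombination]
    simp only [kernelForm_single_single, star_trivial]
  have hnonneg : 0 ≤ kernelForm K f f := by
    rw [← hc, kernelForm_linearCombination]
    exact h.2 c
  exact hf ▸ hnonneg

theorem span_range_eq_top_of_sub_single_mem_supported {R : Type*} [Ring R] (r : X → ℕ)
    {e : X → X →₀ R}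
    (he : ∀ x, e x - .single x 1 ∈ Finsupp.supported R R {y | r y < r x}) :
    Submodule.span R (Set.range e) = ⊤ := by
  have hsingle (n : ℕ) : ∀ x, r x = n → .single x 1 ∈ Submodule.span R (Set.range e) := by
    induction n using Nat.strong_induction_on with | _ n ih =>
    rintro x rfl
    have hlower : Finsupp.supported R R {y | r y < r x} ≤ Submodule.span R (Set.range e) := by
      rw [Finsupp.supported_eq_span_single, Submodule.span_le]
      rintro _ ⟨y, hy, rfl⟩
      exact ih (r y) hy y rfl
    rw [← sub_sub_cancel (e x) (.single x 1)]
    exact sub_mem (Submodule.subset_span ⟨x, rfl⟩) (hlower (he x))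
  rw [eq_top_iff, ← Finsupp.supported_univ, Finsupp.supported_eq_span_single, Submodule.span_le]
  rintro _ ⟨x, -, rfl⟩
  exact hsingle _ x rfl

theorem posSemidef_of_forall_fiber {M : Matrix X X ℝ} (f : X → Y)
    (hM : ∀ x y, f x ≠ f y → M x y = 0)
    (h : ∀ u, (M.submatrix (Subtype.val : {x // f x = u} → X) Subtype.val).PosSemidef) :
    M.PosSemidef := by
  classical
  refine ⟨Matrix.IsHermitian.ext fun x y => ?_, fun z => ?_⟩
  · by_cases hxy : f x = f y
    · exact (h (f y)).1.apply ⟨x, hxy⟩ ⟨y, rfl⟩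
    · rw [hM x y hxy, hM y x (Ne.symm hxy), star_zero]
  · have hfiber (u : Y) : 0 ≤ ∑ x ∈ z.support with f x = u, ∑ y ∈ z.support with f y = u,
        star (z x) * M x y * z y := by
      simp only [← Finset.sum_subtype_eq_sum_filter]
      exact (h u).2 (z.subtypeDomain fun x => f x = u)
    have hsplit : (z.sum fun x a => z.sum fun y b => star a * M x y * b) =
        ∑ u ∈ z.support.image f, ∑ x ∈ z.support with f x = u, ∑ y ∈ z.support with f y = u,
          star (z x) * M x y * z y := by
      rw [Finsupp.sum, ← Finset.sum_fiberwise_of_maps_to fun x => Finset.mem_image_of_mem f]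
      refine Finset.sum_congr rfl fun u _ => Finset.sum_congr rfl fun x hx => ?_
      refine (Finset.sum_filter_of_ne fun y _ hy => ?_).symm
      by_contra hyu
      rw [← (Finset.mem_filter.1 hx).2] at hyu
      exact hy (by simp only [hM x y (Ne.symm hyu), mul_zero, zero_mul])
    rw [hsplit]
    exact Finset.sum_nonneg fun u _ => hfiber u

theorem posSemidef_smul_one_sub_const [Fintype X] [DecidableEq X] {α β : ℝ} (hβ : 0 ≤ β)
    (hcard : β * Fintype.card X ≤ α) :
    (α • (1 : Matrix X X ℝ) - Matrix.of fun _ _ => β).PosSemidef := by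
  refine .of_dotProduct_mulVec_nonneg (Matrix.IsHermitian.ext fun x y => ?_) fun z => ?_
  · simp [Matrix.one_apply, eq_comm]
  · have hmulVec (x : X) :
        (α • (1 : Matrix X X ℝ) - Matrix.of fun _ _ => β).mulVec z x = α * z x - β * ∑ y, z y := by
      simp [Matrix.mulVec, dotProduct, Matrix.one_apply, sub_mul, Finset.mul_sum]
    have hform : star z ⬝ᵥ (α • (1 : Matrix X X ℝ) - Matrix.of fun _ _ => β).mulVec z =
        α * ∑ x, z x ^ 2 - β * (∑ x, z x) ^ 2 := by
      calc _ = ∑ x, (α * z x ^ 2 - β * (∑ y, z y) * z x) :=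
            Finset.sum_congr rfl fun x _ => by rw [hmulVec, Pi.star_apply, star_trivial]; ring
        _ = α * ∑ x, z x ^ 2 - β * (∑ x, z x) ^ 2 := by
            rw [Finset.sum_sub_distrib, ← Finset.mul_sum, ← Finset.mul_sum]; ring
    rw [hform, sub_nonneg]
    calc β * (∑ x, z x) ^ 2 ≤ β * (Fintype.card X * ∑ x, z x ^ 2) := by
          gcongr
          exact sq_sum_le_card_mul_sum_sq
      _ = β * Fintype.card X * ∑ x, z x ^ 2 := by ring
      _ ≤ α * ∑ x, z x ^ 2 := by gcongr

theorem posSemidef_submatrix_of_encard_le [DecidableEq X] {M : Matrix X X ℝ} {s : Set X} {n : ℕ}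
    {α β : ℝ} (hs : s.encard ≤ n) (hβ : 0 ≤ β) (hn : β * n ≤ α)
    (hM : ∀ x ∈ s, ∀ y ∈ s, M x y = (if x = y then α else 0) - β) :
    (M.submatrix (Subtype.val : s → X) Subtype.val).PosSemidef := by
  have := (Set.finite_of_encard_le_coe hs).fintype
  have hcard : Fintype.card s ≤ n := by
    rwa [← Set.coe_fintypeCard, Nat.cast_le] at hs
  have hsub : M.submatrix (Subtype.val : s → X) Subtype.val =
      α • (1 : Matrix s s ℝ) - Matrix.of fun _ _ => β := by
    ext x y
    simp [hM x x.2 y y.2, Matrix.one_apply, Subtype.ext_iff]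
  rw [hsub]
  refine posSemidef_smul_one_sub_const hβ (le_trans ?_ hn)
  gcongr

theorem posSemidef_prod {ι 𝕜 : Type*} [RCLike 𝕜] (s : Finset ι) {M : ι → Matrix X X 𝕜}
    (hM : ∀ i ∈ s, (M i).PosSemidef) : (Matrix.of fun x y => ∏ i ∈ s, M i x y).PosSemidef := by
  classical
  induction s using Finset.induction_on with
  | empty =>
    refine ⟨Matrix.IsHermitian.ext fun _ _ => by simp, fun z => ?_⟩
    have hsq : (z.sum fun _ a => z.sum fun _ b => star a * (1 : 𝕜) * b) =
        star (∑ x ∈ z.support, z x) * ∑ y ∈ z.support, z y := by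
      simp [Finsupp.sum, Finset.sum_mul_sum]
    simpa only [Matrix.of_apply, Finset.prod_empty, hsq] using star_mul_self_nonneg _
  | insert i s hi ih =>
    rw [Finset.forall_mem_insert] at hM
    convert hM.1.hadamard (ih hM.2)
    ext x y
    simp [Finset.prod_insert hi]

theorem posSemidef_integral {Ω 𝕜 : Type*} [RCLike 𝕜] [MeasurableSpace Ω] {μ : Measure Ω}
    {M : Ω → Matrix X X 𝕜} (hM : ∀ ω, (M ω).PosSemidef)
    (hint : ∀ x y, Integrable (fun ω => M ω x y) μ) :
    (Matrix.of fun x y => ∫ ω, M ω x y ∂μ).PosSemidef := by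
  refine ⟨Matrix.IsHermitian.ext fun x y => ?_, fun z => ?_⟩
  · simp only [Matrix.of_apply, ← starRingEnd_apply, ← integral_conj]
    exact integral_congr_ae (ae_of_all _ fun ω => (hM ω).1.apply x y)
  · have hterm (x y : X) : Integrable (fun ω => star (z x) * M ω x y * z y) μ :=
      ((hint x y).const_mul _).mul_const _
    have hsum : (z.sum fun x a => z.sum fun y b => star a * (∫ ω, M ω x y ∂μ) * b) =
        ∫ ω, z.sum fun x a => z.sum fun y b => star a * M ω x y * b ∂μ := by
      simp only [Finsupp.sum]
      rw [integral_finsetSum _ fun x _ => integrable_finsetSum _ fun y _ => hterm x y]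
      refine Finset.sum_congr rfl fun x _ => ?_
      rw [integral_finsetSum _ fun y _ => hterm x y]
      exact Finset.sum_congr rfl fun y _ => by rw [integral_mul_const, integral_const_mul]
    simpa only [Matrix.of_apply, hsum] using integral_nonneg fun ω => (hM ω).2 z

-- Writing the real matrix as a sum of `v vᵀ` turns the complex form into a sum of `|v · z|²`.
theorem isPDKernel_ofReal_of_posSemidef {M : Matrix X X ℝ} (hM : M.PosSemidef) :
    IsPDKernel fun x y => (M x y : ℂ) := by
  intro n x z
  obtain ⟨m, v, hv⟩ := Matrix.posSemidef_iff_eq_sum_vecMulVec.1 (hM.submatrix x)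
  have hMv (i j : Fin n) : M (x i) (x j) = ∑ k, v k i * v k j := by
    simpa [Matrix.sum_apply, Matrix.vecMulVec_apply] using congr($hv i j)
  have hsq : ∑ i, ∑ j, (M (x i) (x j) : ℂ) * (starRingEnd ℂ) (z i) * z j =
      ∑ k, star (∑ i, v k i * z i) * ∑ j, v k j * z j := by
    simp only [hMv, Complex.ofReal_sum, Finset.sum_mul]
    rw [Finset.sum_comm_cycle]
    refine Finset.sum_congr rfl fun k _ => ?_
    rw [star_sum, Finset.sum_mul_sum]
    refine Finset.sum_congr rfl fun i _ => Finset.sum_congr rfl fun j _ => ?_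
    simp only [star_mul', Complex.ofReal_mul, RCLike.star_def, Complex.conj_ofReal]
    ring
  rw [hsq]
  exact Finset.sum_nonneg fun k _ => star_mul_self_nonneg _

end PosSemidef

/-! ### Rooted trees -/

section RootedTree

variable {V : Type*} {G : SimpleGraph V}

open Classical in
/-- The neighbour of `x` one step closer to the root `o`, which is unique if `G` is a tree.
If there is none, in particular for `x = o`, it is `x` itself. -/
noncomputable def treeParent (G : SimpleGraph V) (o x : V) : V :=
  if h : ∃ v, G.Adj x v ∧ G.dist o x = G.dist o v + 1 then h.choose else x

theorem treeParent_root (o : V) : treeParent G o o = o :=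
  dif_neg (by simp)

theorem ne_root_of_dist_pos (G : SimpleGraph V) {o x : V} (h : 0 < G.dist o x) : x ≠ o := by
  rintro rfl
  simp at h

theorem treeParent_spec (hG : G.Connected) {o x : V} (hx : x ≠ o) :
    G.Adj x (treeParent G o x) ∧ G.dist o x = G.dist o (treeParent G o x) + 1 := by
  have h : ∃ v, G.Adj x v ∧ G.dist o x = G.dist o v + 1 := by
    obtain ⟨w, hw⟩ := hG.exists_walk_length_eq_dist x o
    cases w with
    | nil => exact absurd rfl hx
    | @cons _ v _ hadj w =>
      refine ⟨v, hadj, le_antisymm ?_ ?_⟩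
      · have := hG.dist_triangle (u := o) (v := v) (w := x)
        rwa [SimpleGraph.dist_eq_one_iff_adj.2 hadj.symm] at this
      · rw [SimpleGraph.dist_comm (v := x), ← hw, SimpleGraph.dist_comm]
        simpa using SimpleGraph.dist_le w
  rw [treeParent, dif_pos h]
  exact h.choose_spec

theorem treeParent_eq_of_adj (hG : G.IsTree) {o x v : V} (hadj : G.Adj x v)
    (hdist : G.dist o x = G.dist o v + 1) : treeParent G o x = v := by
  have hxo : x ≠ o := ne_root_of_dist_pos G (by omega)
  obtain ⟨hadj', hdist'⟩ := treeParent_spec hG.connected hxo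
  obtain ⟨w, hw⟩ := hG.connected.exists_walk_length_eq_dist v o
  obtain ⟨w', hw'⟩ := hG.connected.exists_walk_length_eq_dist (treeParent G o x) o
  have hpath : (SimpleGraph.Walk.cons hadj w).IsPath := by
    refine SimpleGraph.Walk.isPath_of_length_eq_dist _ ?_
    rw [SimpleGraph.Walk.length_cons, hw, SimpleGraph.dist_comm, ← hdist, SimpleGraph.dist_comm]
  have hpath' : (SimpleGraph.Walk.cons hadj' w').IsPath := by
    refine SimpleGraph.Walk.isPath_of_length_eq_dist _ ?_
    rw [SimpleGraph.Walk.length_cons, hw', SimpleGraph.dist_comm, ← hdist', SimpleGraph.dist_comm]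
  simpa using congr(($((hG.existsUnique_path x o).unique hpath' hpath)).snd)

-- The geodesics from `x` to `o` and from `x` to `y` leave `x` through different edges, so `x` lies
-- between `o` and `y`.
theorem dist_eq_add_of_treeParent_ne (hG : G.IsTree) {o x y : V}
    (h : treeParent G o x ≠ treeParent G y x) : G.dist o y = G.dist o x + G.dist x y := by
  induction hn : G.dist y x generalizing x with
  | zero => simp [hG.connected.dist_eq_zero_iff.1 hn]
  | succ n ih =>
    have hx : x ≠ y := ne_root_of_dist_pos G (by omega)
    set v := treeParent G y x with hv
    obtain ⟨hadj, hdist⟩ := treeParent_spec hG.connected hx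
    rw [← hv] at hadj hdist
    have hov : G.dist o v = G.dist o x + 1 :=
      (hG.dist_eq_dist_add_one_of_adj o hadj).resolve_left fun hox =>
        h (treeParent_eq_of_adj hG hadj hox)
    have hne : treeParent G o v ≠ treeParent G y v := by
      rw [treeParent_eq_of_adj hG hadj.symm hov]
      intro hxv
      rcases eq_or_ne v y with hvy | hvy
      · rw [hvy, treeParent_root] at hxv
        exact hx hxv
      · have := (treeParent_spec hG.connected hvy).2
        rw [← hxv] at this
        omega
    rw [ih hne (by omega), hov, SimpleGraph.dist_comm (u := x), hdist,
      SimpleGraph.dist_comm (u := v)]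
    ring

theorem dist_eq_dist_treeParent_add_one (hG : G.IsTree) {o u y : V} (hne : y ≠ u)
    (hle : G.dist o y ≤ G.dist o u + 1) (hchild : treeParent G o y ≠ u) :
    G.dist y u = G.dist y (treeParent G o u) + 1 := by
  suffices treeParent G o u = treeParent G y u from
    this ▸ (treeParent_spec hG.connected hne.symm).2
  by_contra hpar
  have hdist := dist_eq_add_of_treeParent_ne hG hpar
  have hpos := hG.connected.pos_dist_of_ne hne.symm
  have hadj : G.Adj u y := SimpleGraph.dist_eq_one_iff_adj.1 (by omega)
  exact hchild (treeParent_eq_of_adj hG hadj.symm (by omega))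

theorem treeParent_ne_of_dist_le (hG : G.Connected) {o x y : V} (hne : y ≠ x)
    (hle : G.dist o y ≤ G.dist o x) : treeParent G o y ≠ x := by
  rintro rfl
  have hy : y ≠ o := by
    rintro rfl
    exact hne (treeParent_root y).symm
  have := (treeParent_spec hG hy).2
  omega

/-- The distance of `x` from the root `o` together with the parent of `x`. Its fibres are `{o}` and
the sets of siblings; the distance separates `o` from its children, since `o` is its own parent. -/
noncomputable def siblingClass (G : SimpleGraph V) (o x : V) : ℕ × V :=
  (G.dist o x, treeParent G o x)

theorem encard_siblingClass_eq_zero_le (hG : G.Connected) {o p : V} :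
    {x | siblingClass G o x = (0, p)}.encard ≤ 1 := by
  refine Set.encard_le_one_iff.2 fun x y hx hy => ?_
  rw [← hG.dist_eq_zero_iff.1 (Prod.mk_inj.1 hx).1, ← hG.dist_eq_zero_iff.1 (Prod.mk_inj.1 hy).1]

theorem siblingClass_eq_add_one_subset_neighborSet (hG : G.Connected) {o p : V} {n : ℕ} :
    {x | siblingClass G o x = (n + 1, p)} ⊆ G.neighborSet p := by
  intro x hx
  obtain ⟨hrank, rfl⟩ := Prod.mk_inj.1 hx
  exact (treeParent_spec hG (ne_root_of_dist_pos G (by omega))).1.symm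

theorem encard_siblingClass_eq_add_two_le (hG : G.Connected) {o p : V} {n q : ℕ}
    (hp : (G.neighborSet p).encard ≤ q + 1) :
    {x | siblingClass G o x = (n + 2, p)}.encard ≤ q := by
  rcases Set.eq_empty_or_nonempty {x | siblingClass G o x = (n + 2, p)} with hempty | ⟨x, hx⟩
  · simp [hempty]
  have hrank : G.dist o p = n + 1 := by
    obtain ⟨hrank, rfl⟩ := Prod.mk_inj.1 hx
    have hxo : x ≠ o := ne_root_of_dist_pos G (by omega)
    have := (treeParent_spec hG hxo).2
    omega
  have hpo : p ≠ o := ne_root_of_dist_pos G (by omega)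
  obtain ⟨hadj, hdist⟩ := treeParent_spec hG hpo
  have hnotMem : treeParent G o p ∉ {x | siblingClass G o x = (n + 2, p)} := fun h => by
    have := (Prod.mk_inj.1 h).1
    omega
  have hinsert : (insert (treeParent G o p) {x | siblingClass G o x = (n + 2, p)}).encard ≤ q + 1 :=
    (Set.encard_le_encard
      (Set.insert_subset hadj (siblingClass_eq_add_one_subset_neighborSet hG))).trans hp
  rw [Set.encard_insert_of_notMem hnotMem] at hinsert
  exact (ENat.add_le_add_iff_right ENat.one_ne_top).1 hinsert

end RootedTree

/-! ### The spherical kernel of a tree -/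

section TreeKernel

variable {V : Type*} {G : SimpleGraph V} {o x y : V} {q : ℕ} {t : ℝ}

/-- The kernel `(x, y) ↦ P_{d(x, y)}^{(q)}(t)` on the vertices of a graph. -/
noncomputable def treeKernel (G : SimpleGraph V) (q : ℕ) (t : ℝ) : Matrix V V ℝ :=
  .of fun x y => treeP q (G.dist x y) t

/-- The basis vector at `x` minus its prediction from the parent and grandparent of `x` by the
recurrence of `P_n^{(q)}(t)`, in the tree rooted at `o`. -/
noncomputable def treeResidual (G : SimpleGraph V) (o : V) (q : ℕ) (t : ℝ) (x : V) : V →₀ ℝ :=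
  let p := treeParent G o x
  match G.dist o x with
  | 0 => .single x 1
  | 1 => .single x 1 - t • .single p 1
  | _ + 2 => .single x 1 - ((1 + 1 / (q : ℝ)) * t) • .single p 1 +
      (1 / (q : ℝ)) • .single (treeParent G o p) 1

theorem treeKernel_comm (x y : V) : treeKernel G q t x y = treeKernel G q t y x := by
  simp [treeKernel, SimpleGraph.dist_comm]

theorem kernelForm_treeResidual_single_of_dist_eq_zero (hx : G.dist o x = 0) (y : V) :
    kernelForm (treeKernel G q t) (treeResidual G o q t x) (.single y 1) =
      treeP q (G.dist x y) t := by
  simp [treeResidual, hx, kernelForm_single_single, treeKernel]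

theorem kernelForm_treeResidual_single_of_dist_eq_one (hx : G.dist o x = 1) (y : V) :
    kernelForm (treeKernel G q t) (treeResidual G o q t x) (.single y 1) =
      treeP q (G.dist y x) t - t * treeP q (G.dist y (treeParent G o x)) t := by
  simp only [treeResidual, hx, map_sub, map_smul, LinearMap.sub_apply,
    LinearMap.smul_apply, smul_eq_mul, kernelForm_single_single, treeKernel,
    Matrix.of_apply, SimpleGraph.dist_comm (u := y)]

theorem kernelForm_treeResidual_single_of_dist_eq_add_two {n : ℕ} (hx : G.dist o x = n + 2)
    (y : V) :
    kernelForm (treeKernel G q t) (treeResidual G o q t x) (.single y 1) =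
      treeP q (G.dist y x) t - (1 + 1 / (q : ℝ)) * t * treeP q (G.dist y (treeParent G o x)) t +
        1 / (q : ℝ) * treeP q (G.dist y (treeParent G o (treeParent G o x))) t := by
  simp only [treeResidual, hx, map_sub, map_add, map_smul, LinearMap.sub_apply,
    LinearMap.add_apply, LinearMap.smul_apply, smul_eq_mul, kernelForm_single_single, treeKernel,
    Matrix.of_apply, SimpleGraph.dist_comm (u := y)]

theorem treeResidual_sub_single_mem_supported (hG : G.Connected) (x : V) :
    treeResidual G o q t x - .single x 1 ∈
      Finsupp.supported ℝ ℝ {y | G.dist o y < G.dist o x} := by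
  have hparent {v : V} (hv : 0 < G.dist o v) : G.dist o v = G.dist o (treeParent G o v) + 1 :=
    (treeParent_spec hG (ne_root_of_dist_pos G hv)).2
  unfold treeResidual
  split
  next => simp
  next hx =>
    have hp := hparent (v := x) (by omega)
    rw [sub_sub_cancel_left]
    refine neg_mem (Submodule.smul_mem _ _ (Finsupp.single_mem_supported _ _ ?_))
    rw [Set.mem_ofPred_eq]
    omega
  next n hx =>
    have hp := hparent (v := x) (by omega)
    have hpp := hparent (v := treeParent G o x) (by omega)
    rw [add_sub_right_comm, sub_sub_cancel_left]
    refine add_mem (neg_mem (Submodule.smul_mem _ _ (Finsupp.single_mem_supported _ _ ?_)))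
      (Submodule.smul_mem _ _ (Finsupp.single_mem_supported _ _ ?_)) <;>
    · rw [Set.mem_ofPred_eq]
      omega

-- Unless `y` is the parent of `x`, the distance to `y` increases by one at both steps from the
-- grandparent of `x` to `x`, and the recurrence of `P_n^{(q)}` applies.
theorem kernelForm_treeResidual_single_eq_zero (hG : G.IsTree) (hle : G.dist o y ≤ G.dist o x)
    (hne : siblingClass G o x ≠ siblingClass G o y) :
    kernelForm (treeKernel G q t) (treeResidual G o q t x) (.single y 1) = 0 := by
  have hyx : y ≠ x := by
    rintro rfl
    exact hne rfl
  have hdist := dist_eq_dist_treeParent_add_one hG hyx (by omega)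
    (treeParent_ne_of_dist_le hG.connected hyx hle)
  have hxo : x ≠ o := by
    rintro rfl
    rw [SimpleGraph.dist_self, Nat.le_zero, hG.connected.dist_eq_zero_iff] at hle
    exact hyx hle.symm
  have hox := (treeParent_spec hG.connected hxo).2
  set p := treeParent G o x with hp
  have hsibling (hyo : y ≠ o) : treeParent G o y ≠ p := fun hyp =>
    hne (by rw [siblingClass, siblingClass, hox, (treeParent_spec hG.connected hyo).2, hyp])
  match hrank : G.dist o x with
  | 0 => omega
  | 1 =>
    have hpo : o = p := hG.connected.dist_eq_zero_iff.1 (by omega)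
    obtain rfl : y = o := by
      by_contra hyo
      have hoy := (treeParent_spec hG.connected hyo).2
      exact hsibling hyo ((hG.connected.dist_eq_zero_iff.1 (by omega)).symm.trans hpo)
    rw [kernelForm_treeResidual_single_of_dist_eq_one hrank, ← hp, ← hpo, hrank,
      SimpleGraph.dist_self]
    simp [treeP]
  | n + 2 =>
    rw [kernelForm_treeResidual_single_of_dist_eq_add_two hrank, ← hp, hdist]
    rcases eq_or_ne y p with hyp | hyp
    · have hpo : p ≠ o := ne_root_of_dist_pos G (by omega)
      rw [hyp, SimpleGraph.dist_self,
        SimpleGraph.dist_eq_one_iff_adj.2 (treeParent_spec hG.connected hpo).1]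
      simp only [treeP]
      ring
    · have hchild : treeParent G o y ≠ p := by
        rcases eq_or_ne y o with rfl | hyo
        · rwa [treeParent_root]
        · exact hsibling hyo
      rw [dist_eq_dist_treeParent_add_one hG hyp (by omega) hchild]
      simp only [treeP]
      ring

theorem kernelForm_treeResidual_treeResidual (hG : G.IsTree) (hle : G.dist o y ≤ G.dist o x) :
    kernelForm (treeKernel G q t) (treeResidual G o q t x) (treeResidual G o q t y) =
      kernelForm (treeKernel G q t) (treeResidual G o q t x) (.single y 1) := by
  rw [← sub_eq_zero, ← map_sub, ← LinearMap.mem_ker]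
  refine (?_ : Finsupp.supported ℝ ℝ {z | G.dist o z < G.dist o y} ≤ _)
    (treeResidual_sub_single_mem_supported hG.connected y)
  rw [Finsupp.supported_eq_span_single, Submodule.span_le]
  rintro _ ⟨z, hz, rfl⟩
  have hzy : G.dist o z < G.dist o y := hz
  exact kernelForm_treeResidual_single_eq_zero hG (by omega) fun h => by
    have := (Prod.mk_inj.1 h).1
    omega

theorem kernelForm_treeResidual_eq_zero (hG : G.IsTree)
    (hne : siblingClass G o x ≠ siblingClass G o y) :
    kernelForm (treeKernel G q t) (treeResidual G o q t x) (treeResidual G o q t y) = 0 := by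
  wlog hle : G.dist o y ≤ G.dist o x generalizing x y
  · rw [kernelForm_comm treeKernel_comm]
    exact this hne.symm (le_of_not_ge hle)
  · rw [kernelForm_treeResidual_treeResidual hG hle,
      kernelForm_treeResidual_single_eq_zero hG hle hne]

theorem dist_eq_two_of_sibling (hG : G.IsTree) (hx : x ≠ o) (hxy : x ≠ y)
    (hrank : G.dist o x = G.dist o y) (hparent : treeParent G o x = treeParent G o y) :
    G.dist y x = 2 := by
  have hy : y ≠ o := ne_root_of_dist_pos G (hrank ▸ hG.connected.pos_dist_of_ne hx.symm)
  rw [dist_eq_dist_treeParent_add_one hG hxy.symm (by omega)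
    (treeParent_ne_of_dist_le hG.connected hxy.symm hrank.ge), hparent,
    SimpleGraph.dist_eq_one_iff_adj.2 (treeParent_spec hG.connected hy).1]

theorem kernelForm_treeResidual_sibling_of_dist_eq_one [DecidableEq V] (hG : G.IsTree)
    (hx : G.dist o x = 1) (hy : G.dist o y = 1) (hparent : treeParent G o x = treeParent G o y) :
    kernelForm (treeKernel G q t) (treeResidual G o q t x) (treeResidual G o q t y) =
      (if x = y then (1 + 1 / (q : ℝ)) * (1 - t ^ 2) else 0) - 1 / (q : ℝ) * (1 - t ^ 2) := by
  have hne {v : V} (hv : G.dist o v = 1) : v ≠ o := ne_root_of_dist_pos G (by omega)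
  rw [kernelForm_treeResidual_treeResidual hG (by omega),
    kernelForm_treeResidual_single_of_dist_eq_one hx, hparent,
    SimpleGraph.dist_eq_one_iff_adj.2 (treeParent_spec hG.connected (hne hy)).1]
  split
  next hxy =>
    rw [hxy, SimpleGraph.dist_self]
    simp only [treeP]
    ring
  next hxy =>
    rw [dist_eq_two_of_sibling hG (hne hx) hxy (by omega) hparent]
    simp only [treeP]
    ring

theorem kernelForm_treeResidual_sibling_of_dist_eq_add_two [DecidableEq V] (hG : G.IsTree)
    {n : ℕ} (hx : G.dist o x = n + 2) (hy : G.dist o y = n + 2)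
    (hparent : treeParent G o x = treeParent G o y) :
    kernelForm (treeKernel G q t) (treeResidual G o q t x) (treeResidual G o q t y) =
      (if x = y then (1 + 1 / (q : ℝ)) * (1 - t ^ 2) else 0) -
        1 / (q : ℝ) * (1 + 1 / (q : ℝ)) * (1 - t ^ 2) := by
  have hxo : x ≠ o := ne_root_of_dist_pos G (by omega)
  have hyo : y ≠ o := ne_root_of_dist_pos G (by omega)
  have hoy := treeParent_spec hG.connected hyo
  have hpo : treeParent G o y ≠ o := ne_root_of_dist_pos G (by omega)
  have hop := treeParent_spec hG.connected hpo
  have hgrand : G.dist y (treeParent G o (treeParent G o y)) = 2 := by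
    have hgy : treeParent G o (treeParent G o y) ≠ y := fun h => by
      rw [h] at hop
      omega
    rw [SimpleGraph.dist_comm, dist_eq_dist_treeParent_add_one (o := o) hG hgy (by omega)
      (treeParent_ne_of_dist_le hG.connected hgy (by omega)),
      SimpleGraph.dist_eq_one_iff_adj.2 hop.1.symm]
  rw [kernelForm_treeResidual_treeResidual hG (by omega),
    kernelForm_treeResidual_single_of_dist_eq_add_two hx, hparent, hgrand,
    SimpleGraph.dist_eq_one_iff_adj.2 hoy.1]
  split
  next hxy =>
    rw [hxy, SimpleGraph.dist_self]
    simp only [treeP]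
    ring
  next hxy =>
    rw [dist_eq_two_of_sibling hG hxo hxy (by omega) hparent]
    simp only [treeP]
    ring

theorem posSemidef_kernelForm_treeResidual_siblings (hq : q ≠ 0) (hG : G.IsTree)
    (hdeg : ∀ v, (G.neighborSet v).encard ≤ q + 1) (ht : t ∈ Set.Icc (-1) 1) (u : ℕ × V) :
    ((Matrix.of fun x y => kernelForm (treeKernel G q t) (treeResidual G o q t x)
      (treeResidual G o q t y)).submatrix
        (Subtype.val : {x // siblingClass G o x = u} → V) Subtype.val).PosSemidef := by
  classical
  have hcancel : 1 / (q : ℝ) * q = 1 := one_div_mul_cancel (Nat.cast_ne_zero.2 hq)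
  have ht' : 0 ≤ 1 - t ^ 2 := by nlinarith [ht.1, ht.2]
  have hrank {x : V} (hx : siblingClass G o x = u) : G.dist o x = u.1 := congr_arg Prod.fst hx
  have hparent {x y : V} (hx : siblingClass G o x = u) (hy : siblingClass G o y = u) :
      treeParent G o x = treeParent G o y :=
    congr_arg Prod.snd (hx.trans hy.symm)
  obtain ⟨_ | _ | n, p⟩ := u
  · refine posSemidef_submatrix_of_encard_le (n := 1) (α := 1) (β := 0)
      (encard_siblingClass_eq_zero_le hG.connected) le_rfl (by simp) fun x hx y hy => ?_
    obtain rfl := hG.connected.dist_eq_zero_iff.1 (hrank hx)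
    obtain rfl := hG.connected.dist_eq_zero_iff.1 (hrank hy)
    simp [kernelForm_treeResidual_treeResidual hG le_rfl,
      kernelForm_treeResidual_single_of_dist_eq_zero, treeP]
  · refine posSemidef_submatrix_of_encard_le (n := q + 1)
      ((Set.encard_le_encard (siblingClass_eq_add_one_subset_neighborSet hG.connected)).trans
        (hdeg p)) (by positivity) ?_ fun x hx y hy =>
        kernelForm_treeResidual_sibling_of_dist_eq_one hG (hrank hx) (hrank hy) (hparent hx hy)
    refine le_of_eq ?_
    calc 1 / (q : ℝ) * (1 - t ^ 2) * ((q + 1 : ℕ) : ℝ)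
        = (1 / (q : ℝ) * q + 1 / (q : ℝ)) * (1 - t ^ 2) := by push_cast; ring
      _ = (1 + 1 / (q : ℝ)) * (1 - t ^ 2) := by rw [hcancel]
  · refine posSemidef_submatrix_of_encard_le (n := q)
      (encard_siblingClass_eq_add_two_le hG.connected (hdeg p)) (by positivity) ?_
      fun x hx y hy =>
        kernelForm_treeResidual_sibling_of_dist_eq_add_two hG (hrank hx) (hrank hy) (hparent hx hy)
    refine le_of_eq ?_
    calc 1 / (q : ℝ) * (1 + 1 / (q : ℝ)) * (1 - t ^ 2) * q
        = 1 / (q : ℝ) * q * ((1 + 1 / (q : ℝ)) * (1 - t ^ 2)) := by ring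
      _ = (1 + 1 / (q : ℝ)) * (1 - t ^ 2) := by rw [hcancel, one_mul]

theorem posSemidef_treeKernel (hq : q ≠ 0) (hG : G.IsTree)
    (hdeg : ∀ v, (G.neighborSet v).encard ≤ q + 1) (ht : t ∈ Set.Icc (-1) 1) :
    (treeKernel G q t).PosSemidef := by
  obtain ⟨o⟩ := hG.connected.nonempty
  refine posSemidef_of_span_eq_top treeKernel_comm
    (span_range_eq_top_of_sub_single_mem_supported (G.dist o)
      (e := treeResidual G o q t) (treeResidual_sub_single_mem_supported hG.connected)) ?_
  exact posSemidef_of_forall_fiber (siblingClass G o)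
    (fun x y => kernelForm_treeResidual_eq_zero hG)
    (posSemidef_kernelForm_treeResidual_siblings hq hG hdeg ht)

end TreeKernel

theorem continuous_treeP (q n : ℕ) : Continuous (treeP q n) := by
  induction n using Nat.twoStepInduction with
  | zero => exact continuous_const
  | one => exact continuous_id
  | more n ih ih' =>
    simp only [treeP]
    fun_prop

theorem IsHomTree.isTree {V : Type} {G : SimpleGraph V} {q : ℕ} (hG : IsHomTree G q) : G.IsTree :=
  ⟨hG.1, hG.2.1⟩

theorem IsHomTree.encard_neighborSet {V : Type} {G : SimpleGraph V} {q : ℕ} (hG : IsHomTree G q)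
    (v : V) : (G.neighborSet v).encard = q + 1 := by
  have hcard := hG.2.2 v
  rw [← (Set.finite_of_ncard_ne_zero (by omega)).cast_ncard_eq, hcard]
  rfl

theorem stmt_15_general {ι : Type*} [Fintype ι] (q : ι → ℕ) (hq : ∀ i, q i ≠ 0)
    {V : ι → Type*} (G : ∀ i, SimpleGraph (V i)) (hG : ∀ i, (G i).IsTree)
    (hdeg : ∀ i v, ((G i).neighborSet v).encard ≤ q i + 1)
    (μ : Measure (ι → Set.Icc (-1 : ℝ) 1)) [IsFiniteMeasure μ] :
    IsPDKernel (fun x y : (∀ i, V i) =>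
      ∫ t, ∏ i, ((treeP (q i) ((G i).dist (x i) (y i)) (t i : ℝ) : ℝ) : ℂ) ∂μ) := by
  have hprod (t : ι → Set.Icc (-1 : ℝ) 1) : (Matrix.of fun x y : ∀ i, V i =>
      ∏ i, treeP (q i) ((G i).dist (x i) (y i)) (t i)).PosSemidef :=
    posSemidef_prod Finset.univ fun i _ =>
      (posSemidef_treeKernel (hq i) (hG i) (hdeg i) (t i).2).submatrix fun x : ∀ i, V i => x i
  have hcont (x y : ∀ i, V i) : Continuous fun t : ι → Set.Icc (-1 : ℝ) 1 =>
      ∏ i, treeP (q i) ((G i).dist (x i) (y i)) (t i) :=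
    continuous_finsetProd _ fun i _ => (continuous_treeP _ _).comp
      (continuous_subtype_val.comp (continuous_apply i))
  have hint := posSemidef_integral (μ := μ) hprod fun x y =>
    (hcont x y).integrable_of_hasCompactSupport (.of_compactSpace _)
  simpa only [Matrix.of_apply, ← integral_complex_ofReal, Complex.ofReal_prod] using
    isPDKernel_ofReal_of_posSemidef hint

theorem stmt_15 (N : ℕ) (hN : 1 ≤ N) (q : Fin N → ℕ) (hq : ∀ i, 2 ≤ q i)
    (V : Fin N → Type) (G : ∀ i, SimpleGraph (V i))
    (hG : ∀ i, IsHomTree (G i) (q i))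
    (μ : Measure (Fin N → Set.Icc (-1 : ℝ) 1)) [IsFiniteMeasure μ] :
    IsPDKernel (fun x y : (∀ i, V i) =>
      ∫ t, ∏ i, ((treeP (q i) ((G i).dist (x i) (y i)) (t i : ℝ) : ℝ) : ℂ) ∂μ) :=
  stmt_15_general q (fun i => (two_pos.trans_le (hq i)).ne') G (fun i => (hG i).isTree)
    (fun i v => ((hG i).encard_neighborSet v).le) μ
end

section
/- Let X be a median graph. Then the edge-path distance d on X is a conditionally negative kernel on the vertex set of X. -/
/-!
The halfspace of an edge `ab` is the set of vertices closer to `a` than to `b`. In a median graph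
an edge `cd` leaving the halfspace of `ab` has the same halfspace: medians supply a chain of
squares moving `cd` to `ab`, and opposite edges of a square have the same halfspace, since otherwise
a median would complete the square to a `K_{2,3}`, where three vertices have two medians. Hence
along a geodesic from `x` to `y` each edge crosses exactly one halfspace containing `x`, never to
be crossed again, and `d(x, y)` is the number of halfspaces containing `x` but not `y`. A single
halfspace `H` contributes the kernel `1_H(x) (1 - 1_H(y))`, whose quadratic form at weights `λ` of
total mass zero is `-(∑ λᵢ 1_H(xᵢ))² ≤ 0`.
-/

open MeasureTheory Filter Finset
open scoped ComplexOrder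

/-- `G` is a median graph: connected, and for all vertices `x y z` the triple
intersection of intervals `I(x,y) ∩ I(y,z) ∩ I(z,x)` has exactly one element. -/
def IsMedianGraph {V : Type} (G : SimpleGraph V) : Prop :=
  G.Connected ∧ ∀ x y z : V, ∃! u : V,
    (G.dist x y = G.dist x u + G.dist u y ∧
     G.dist y z = G.dist y u + G.dist u z ∧
     G.dist z x = G.dist z u + G.dist u x)

/-- A conditionally negative kernel on `Y`, tested on finite sequences that may repeat points. -/
def IsCondNegKernel {Y : Type*} (ψ : Y → Y → ℝ) : Prop :=
  (∀ y, ψ y y = 0) ∧ (∀ x y, ψ x y = ψ y x) ∧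
    ∀ (n : ℕ) (y : Fin n → Y) (lam : Fin n → ℝ), ∑ i, lam i = 0 →
      ∑ i, ∑ j, lam i * lam j * ψ (y i) (y j) ≤ 0

section Kernel

lemma sum_sum_mul_mul_one_sub {ι R : Type*} [Fintype ι] [CommRing R] {w : ι → R}
    (hw : ∑ i, w i = 0) (e : ι → R) :
    ∑ i, ∑ j, w i * w j * (e i * (1 - e j)) = -(∑ i, w i * e i) ^ 2 := by
  calc ∑ i, ∑ j, w i * w j * (e i * (1 - e j))
      = (∑ i, w i * e i) * ∑ j, (w j - w j * e j) := by
        rw [Finset.sum_mul_sum]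
        exact Finset.sum_congr rfl fun i _ ↦ Finset.sum_congr rfl fun j _ ↦ by ring
    _ = -(∑ i, w i * e i) ^ 2 := by
        rw [Finset.sum_sub_distrib, hw]
        ring

lemma exists_finset_ncard_diff_eq_sum {ι α : Type*} (R : Type*) [Finite ι] [Ring R]
    (A : ι → Set α) (hA : ∀ i j, (A i \ A j).Finite) :
    ∃ S : Finset α, ∀ i j, ((A i \ A j).ncard : R) =
      ∑ s ∈ S, (A i).indicator 1 s * (1 - (A j).indicator 1 s) := by
  classical
  have hfin : (⋃ i, ⋃ j, A i \ A j).Finite :=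
    Set.finite_iUnion fun i ↦ Set.finite_iUnion (hA i)
  refine ⟨hfin.toFinset, fun i j ↦ ?_⟩
  have hsub : (hA i j).toFinset ⊆ hfin.toFinset :=
    Set.Finite.toFinset_mono (Set.subset_iUnion₂_of_subset i j subset_rfl)
  rw [Set.ncard_eq_toFinset_card _ (hA i j), Finset.cast_card,
    ← Finset.sum_indicator_subset _ hsub, Set.Finite.coe_toFinset]
  refine Finset.sum_congr rfl fun s _ ↦ ?_
  by_cases hi : s ∈ A i <;> by_cases hj : s ∈ A j <;> simp [hi, hj]

theorem isCondNegKernel_of_encard_diff {Y α : Type*} {d : Y → Y → ℕ} (A : Y → Set α)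
    (hA : ∀ x y, (A x \ A y).encard = d x y) (hd : ∀ x y, d x y = d y x) :
    IsCondNegKernel fun x y ↦ (d x y : ℝ) := by
  have hncard (x y : Y) : (A x \ A y).ncard = d x y := by simp [Set.ncard, hA]
  refine ⟨fun y ↦ by simp [← hncard], fun x y ↦ congrArg Nat.cast (hd x y), fun n y lam hlam ↦ ?_⟩
  obtain ⟨S, hS⟩ := exists_finset_ncard_diff_eq_sum ℝ (A ∘ y)
    fun i j ↦ Set.finite_of_encard_eq_coe (hA (y i) (y j))
  simp only [Function.comp_apply, hncard] at hS
  calc ∑ i, ∑ j, lam i * lam j * (d (y i) (y j) : ℝ)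
      = ∑ i, ∑ j, ∑ s ∈ S, lam i * lam j *
          ((A (y i)).indicator 1 s * (1 - (A (y j)).indicator 1 s)) := by
        simp only [hS, Finset.mul_sum]
    _ = ∑ s ∈ S, ∑ i, ∑ j, lam i * lam j *
          ((A (y i)).indicator 1 s * (1 - (A (y j)).indicator 1 s)) := by
        simp only [Finset.sum_comm (t := S)]
    _ = ∑ s ∈ S, -(∑ i, lam i * (A (y i)).indicator 1 s) ^ 2 :=
        Finset.sum_congr rfl fun s _ ↦
          sum_sum_mul_mul_one_sub hlam fun i ↦ (A (y i)).indicator 1 s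
    _ ≤ 0 := Finset.sum_nonpos fun s _ ↦ neg_nonpos.2 (sq_nonneg _)

end Kernel

section Halfspace

variable {V : Type*} {G : SimpleGraph V}

lemma exists_adj_dist_eq_of_dist_eq_add_one {x y : V} {n : ℕ} (h : G.dist x y = n + 1) :
    ∃ z, G.Adj z y ∧ G.dist x z = n := by
  obtain ⟨p, hp⟩ := SimpleGraph.exists_walk_of_dist_ne_zero (h.trans_ne n.succ_ne_zero)
  have hnil : ¬p.Nil := by
    rw [← SimpleGraph.Walk.length_eq_zero_iff]
    omega
  refine ⟨p.penultimate, p.adj_penultimate hnil, ?_⟩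
  rw [← SimpleGraph.length_eq_dist_of_subwalk hp p.isSubwalk_rfl.dropLast,
    SimpleGraph.Walk.length_dropLast]
  omega

/-- The halfspace of an edge `ab`: the vertices strictly closer to `a` than to `b`. It is defined
for all pairs of vertices, but only meant for adjacent ones. -/
def halfspace (G : SimpleGraph V) (a b : V) : Set V :=
  {v | G.dist v a < G.dist v b}

lemma mem_halfspace {a b v : V} : v ∈ halfspace G a b ↔ G.dist v a < G.dist v b :=
  Iff.rfl

/-- The set of all halfspaces of edges that contain the vertex `x`; it serves as an embedding of
the graph into a cube. -/
def halfspacesAt (G : SimpleGraph V) (x : V) : Set (Set V) :=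
  {H | (∃ a b, G.Adj a b ∧ H = halfspace G a b) ∧ x ∈ H}

/-- The property that every edge leaving a halfspace, taken as an edge oriented outwards, has this
same halfspace. -/
def CrossingEdgesDefineHalfspaces (G : SimpleGraph V) : Prop :=
  ∀ ⦃a b c d : V⦄, G.Adj a b → G.Adj c d → c ∈ halfspace G a b → d ∉ halfspace G a b →
    halfspace G c d = halfspace G a b

lemma CrossingEdgesDefineHalfspaces.halfspacesAt_diff_eq_insert
    (hG : CrossingEdgesDefineHalfspaces G) {x y z : V} (hzy : G.Adj z y)
    (hx : x ∈ halfspace G z y) :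
    halfspacesAt G x \ halfspacesAt G y =
      insert (halfspace G z y) (halfspacesAt G x \ halfspacesAt G z) := by
  ext H
  constructor
  · rintro ⟨⟨⟨a, b, hab, rfl⟩, hxH⟩, hy⟩
    have hyH : y ∉ halfspace G a b := fun hyH ↦ hy ⟨⟨a, b, hab, rfl⟩, hyH⟩
    by_cases hzH : z ∈ halfspace G a b
    · exact Or.inl (hG hab hzy hzH hyH).symm
    · exact Or.inr ⟨⟨⟨a, b, hab, rfl⟩, hxH⟩, fun hz ↦ hzH hz.2⟩
  · rintro (rfl | ⟨⟨⟨a, b, hab, rfl⟩, hxH⟩, hz⟩)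
    · exact ⟨⟨⟨z, y, hzy, rfl⟩, hx⟩, fun hy ↦ by simpa [mem_halfspace] using hy.2⟩
    · have hzH : z ∉ halfspace G a b := fun hzH ↦ hz ⟨⟨a, b, hab, rfl⟩, hzH⟩
      refine ⟨⟨⟨a, b, hab, rfl⟩, hxH⟩, fun ⟨_, hyH⟩ ↦ ?_⟩
      rw [← hG hab hzy.symm hyH hzH] at hxH
      exact lt_asymm (mem_halfspace.1 hxH) hx

theorem CrossingEdgesDefineHalfspaces.encard_halfspacesAt_diff
    (hG : CrossingEdgesDefineHalfspaces G) (hconn : G.Connected) (x y : V) :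
    (halfspacesAt G x \ halfspacesAt G y).encard = G.dist x y := by
  induction hn : G.dist x y generalizing y with
  | zero =>
    obtain rfl := hconn.dist_eq_zero_iff.1 hn
    simp
  | succ n ih =>
    obtain ⟨z, hzy, hxz⟩ := exists_adj_dist_eq_of_dist_eq_add_one hn
    have hx : x ∈ halfspace G z y := by rw [mem_halfspace]; omega
    have hz : z ∈ halfspace G z y := by simp [mem_halfspace, SimpleGraph.dist_eq_one_iff_adj.2 hzy]
    rw [hG.halfspacesAt_diff_eq_insert hzy hx, Set.encard_insert_of_notMem, ih z hxz]
    · norm_cast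
    · exact fun h ↦ h.2 ⟨⟨z, y, hzy, rfl⟩, hz⟩

end Halfspace

/-- A modular graph: every triple of vertices has a median, possibly more than one. Median graphs
are the modular graphs in which it is unique. -/
structure IsModularGraph {V : Type*} (G : SimpleGraph V) : Prop where
  connected : G.Connected
  exists_median (x y z : V) : ∃ u, G.dist x y = G.dist x u + G.dist u y ∧
    G.dist y z = G.dist y u + G.dist u z ∧ G.dist z x = G.dist z u + G.dist u x

namespace IsModularGraph

variable {V : Type*} {G : SimpleGraph V}

lemma dist_eq_dist_add_one_of_adj (hG : IsModularGraph G) {a b : V} (hab : G.Adj a b) (v : V) :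
    G.dist v b = G.dist v a + 1 ∨ G.dist v a = G.dist v b + 1 := by
  have hdist : G.dist a b = 1 := SimpleGraph.dist_eq_one_iff_adj.2 hab
  obtain ⟨u, hva, hau, hbv⟩ := hG.exists_median v a b
  rw [G.dist_comm (u := b), G.dist_comm (u := b), G.dist_comm (u := u) (v := v)] at hbv
  rw [G.dist_comm (u := u) (v := a)] at hva
  omega

lemma mem_halfspace_iff (hG : IsModularGraph G) {a b : V} (hab : G.Adj a b) {v : V} :
    v ∈ halfspace G a b ↔ G.dist v b = G.dist v a + 1 := by
  have := hG.dist_eq_dist_add_one_of_adj hab v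
  rw [mem_halfspace]
  omega

lemma notMem_halfspace_iff (hG : IsModularGraph G) {a b : V} (hab : G.Adj a b) {v : V} :
    v ∉ halfspace G a b ↔ G.dist v a = G.dist v b + 1 := by
  have := hG.dist_eq_dist_add_one_of_adj hab v
  rw [mem_halfspace]
  omega

lemma dist_eq_two (hG : IsModularGraph G) {a m b : V} (ham : G.Adj a m) (hmb : G.Adj m b)
    (hab : a ≠ b) : G.dist a b = 2 := by
  have h := hG.dist_eq_dist_add_one_of_adj hmb a
  have hpos := hG.connected.pos_dist_of_ne hab
  rw [SimpleGraph.dist_eq_one_iff_adj.2 ham] at h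
  omega

theorem quadrangle (hG : IsModularGraph G) {c m d v : V} (hcm : G.Adj c m) (hmd : G.Adj m d)
    (hcd : c ≠ d) (hv : G.dist v c = G.dist v d) :
    ∃ u, G.Adj c u ∧ G.Adj u d ∧ G.dist v c = G.dist v u + 1 := by
  have htwo := hG.dist_eq_two hcm hmd hcd
  obtain ⟨u, hvc, hcu, hdv⟩ := hG.exists_median v c d
  rw [G.dist_comm (u := d), G.dist_comm (u := d), G.dist_comm (u := u) (v := v)] at hdv
  rw [G.dist_comm (u := u) (v := c)] at hvc
  exact ⟨u, SimpleGraph.dist_eq_one_iff_adj.1 (by omega),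
    SimpleGraph.dist_eq_one_iff_adj.1 (by omega), by omega⟩

/-- If `v` separated the two edges, the square together with a vertex supplied by the quadrangle
condition would form a `K_{2,3}`. -/
lemma halfspace_subset_of_square (hG : IsModularGraph G)
    (hK : ∀ p q, p ≠ q → (G.commonNeighbors p q).encard ≤ 2) {c d c' d' : V}
    (hcd : G.Adj c d) (hdd' : G.Adj d d') (hcc' : G.Adj c c') (hc'd' : G.Adj c' d')
    (hcd' : c ≠ d') (hdc' : d ≠ c') : halfspace G c d ⊆ halfspace G c' d' := by
  intro v hv
  by_contra hv'
  rw [hG.mem_halfspace_iff hcd] at hv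
  rw [hG.notMem_halfspace_iff hc'd'] at hv'
  have hvcc' := hG.dist_eq_dist_add_one_of_adj hcc' v
  have hvdd' := hG.dist_eq_dist_add_one_of_adj hdd' v
  obtain ⟨u, hcu, hud', hu⟩ := hG.quadrangle hcd hdd' hcd' (v := v) (by omega)
  have hdu : d ≠ u := by rintro rfl; omega
  have hc'u : c' ≠ u := by rintro rfl; omega
  have hsub : {d, c', u} ⊆ G.commonNeighbors c d' := by
    rintro w (rfl | rfl | rfl)
    exacts [⟨hcd, hdd'.symm⟩, ⟨hcc', hc'd'.symm⟩, ⟨hcu, hud'.symm⟩]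
  have hthree : ({d, c', u} : Set V).encard = 3 :=
    Set.encard_eq_three.2 ⟨d, c', u, hdc', hdu, hc'u, rfl⟩
  have hle := (Set.encard_le_encard hsub).trans (hK c d' hcd')
  rw [hthree] at hle
  exact absurd hle (by decide)

lemma halfspace_eq_of_square (hG : IsModularGraph G)
    (hK : ∀ p q, p ≠ q → (G.commonNeighbors p q).encard ≤ 2) {c d c' d' : V}
    (hcd : G.Adj c d) (hdd' : G.Adj d d') (hcc' : G.Adj c c') (hc'd' : G.Adj c' d')
    (hcd' : c ≠ d') (hdc' : d ≠ c') : halfspace G c d = halfspace G c' d' :=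
  Set.Subset.antisymm (hG.halfspace_subset_of_square hK hcd hdd' hcc' hc'd' hcd' hdc')
    (hG.halfspace_subset_of_square hK hc'd' hdd'.symm hcc'.symm hcd hdc'.symm hcd'.symm)

lemma dist_eq_dist_of_crossing (hG : IsModularGraph G) {a b c d : V} (hab : G.Adj a b)
    (hcd : G.Adj c d) (hc : c ∈ halfspace G a b) (hd : d ∉ halfspace G a b) :
    G.dist b d = G.dist a c := by
  rw [hG.mem_halfspace_iff hab, G.dist_comm, G.dist_comm (v := a)] at hc
  rw [hG.notMem_halfspace_iff hab, G.dist_comm, G.dist_comm (v := b)] at hd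
  have ha := hG.dist_eq_dist_add_one_of_adj hcd a
  have hb := hG.dist_eq_dist_add_one_of_adj hcd b
  omega

lemma exists_square_of_crossing (hG : IsModularGraph G) {a b c d : V} {k : ℕ} (hab : G.Adj a b)
    (hcd : G.Adj c d) (hc : c ∈ halfspace G a b) (hd : d ∉ halfspace G a b)
    (hk : G.dist a c = k + 1) :
    ∃ c' d', G.Adj d d' ∧ G.Adj c c' ∧ G.Adj c' d' ∧
      c' ∈ halfspace G a b ∧ d' ∉ halfspace G a b ∧ G.dist a c' = k := by
  have hbd : G.dist b d = k + 1 := (hG.dist_eq_dist_of_crossing hab hcd hc hd).trans hk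
  obtain ⟨d', hd'd, hbd'⟩ := exists_adj_dist_eq_of_dist_eq_add_one hbd
  have hbc := (hG.mem_halfspace_iff hab).1 hc
  have had := (hG.notMem_halfspace_iff hab).1 hd
  have had' := hG.dist_eq_dist_add_one_of_adj hd'd a
  have hd'ab := hG.dist_eq_dist_add_one_of_adj hab d'
  simp only [G.dist_comm (v := a), G.dist_comm (v := b)] at hbc had hd'ab
  have hne : c ≠ d' := by rintro rfl; omega
  obtain ⟨c', hcc', hc'd', hac'⟩ := hG.quadrangle hcd hd'd.symm hne (v := a) (by omega)
  have hbcc' := hG.dist_eq_dist_add_one_of_adj hcc' b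
  have hbc'd' := hG.dist_eq_dist_add_one_of_adj hc'd' b
  refine ⟨c', d', hd'd.symm, hcc', hc'd', ?_, ?_, by omega⟩
  · rw [mem_halfspace, G.dist_comm, G.dist_comm (v := b)]
    omega
  · rw [mem_halfspace, G.dist_comm, G.dist_comm (v := b)]
    omega

theorem crossingEdgesDefineHalfspaces (hG : IsModularGraph G)
    (hK : ∀ p q, p ≠ q → (G.commonNeighbors p q).encard ≤ 2) :
    CrossingEdgesDefineHalfspaces G := by
  intro a b c d hab hcd hc hd
  induction hk : G.dist a c generalizing c d with
  | zero =>
    have hbd := (hG.dist_eq_dist_of_crossing hab hcd hc hd).trans hk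
    rw [hG.connected.dist_eq_zero_iff.1 hk, hG.connected.dist_eq_zero_iff.1 hbd]
  | succ k ih =>
    obtain ⟨c', d', hdd', hcc', hc'd', hc', hd', hk'⟩ :=
      hG.exists_square_of_crossing hab hcd hc hd hk
    rw [← ih hc'd' hc' hd' hk']
    exact hG.halfspace_eq_of_square hK hcd hdd' hcc' hc'd' (fun h ↦ hd' (h ▸ hc))
      fun h ↦ hd (h ▸ hc')

end IsModularGraph

namespace IsMedianGraph

variable {V : Type} {G : SimpleGraph V}

lemma isModularGraph (hG : IsMedianGraph G) : IsModularGraph G :=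
  ⟨hG.1, fun x y z ↦ (hG.2 x y z).exists⟩

lemma encard_commonNeighbors_le_two (hG : IsMedianGraph G) {p q : V} (hpq : p ≠ q) :
    (G.commonNeighbors p q).encard ≤ 2 := by
  by_contra! hlt
  obtain ⟨T, hT, hthree⟩ := Set.exists_subset_encard_eq (Order.add_one_le_of_lt hlt)
  obtain ⟨x, y, z, hxy, hxz, hyz, rfl⟩ := Set.encard_eq_three.1 hthree
  have hx : x ∈ G.commonNeighbors p q := hT (by simp)
  have hy : y ∈ G.commonNeighbors p q := hT (by simp)
  have hz : z ∈ G.commonNeighbors p q := hT (by simp)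
  have dist_eq_add {r s t : V} (hrs : G.Adj r s) (hrt : G.Adj r t) (hst : s ≠ t) :
      G.dist s t = G.dist s r + G.dist r t := by
    rw [hG.isModularGraph.dist_eq_two hrs.symm hrt hst,
      SimpleGraph.dist_eq_one_iff_adj.2 hrs.symm, SimpleGraph.dist_eq_one_iff_adj.2 hrt]
  exact hpq <| (hG.2 x y z).unique
    ⟨dist_eq_add hx.1 hy.1 hxy, dist_eq_add hy.1 hz.1 hyz, dist_eq_add hz.1 hx.1 hxz.symm⟩
    ⟨dist_eq_add hx.2 hy.2 hxy, dist_eq_add hy.2 hz.2 hyz, dist_eq_add hz.2 hx.2 hxz.symm⟩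

theorem crossingEdgesDefineHalfspaces (hG : IsMedianGraph G) : CrossingEdgesDefineHalfspaces G :=
  hG.isModularGraph.crossingEdgesDefineHalfspaces fun _ _ ↦ hG.encard_commonNeighbors_le_two

end IsMedianGraph

/-- Besides median graphs, this applies for instance to complete graphs and to odd cycles. -/
theorem stmt_17_general {V : Type*} {G : SimpleGraph V} (hconn : G.Connected)
    (hG : CrossingEdgesDefineHalfspaces G) : IsCondNegKernel fun x y ↦ (G.dist x y : ℝ) :=
  isCondNegKernel_of_encard_diff (halfspacesAt G) (hG.encard_halfspacesAt_diff hconn)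
    fun _ _ ↦ G.dist_comm

theorem stmt_17 (V : Type) (G : SimpleGraph V) (hG : IsMedianGraph G) :
    (∀ x : V, (G.dist x x : ℝ) = 0) ∧
    (∀ x y : V, (G.dist x y : ℝ) = (G.dist y x : ℝ)) ∧
    (∀ (n : ℕ) (x : Fin n → V) (lam : Fin n → ℝ), (∑ i, lam i) = 0 →
      ∑ i, ∑ j, lam i * lam j * (G.dist (x i) (x j) : ℝ) ≤ 0) :=
  stmt_17_general hG.1 hG.crossingEdgesDefineHalfspaces
end
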